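/- Low-rank counterexample: For the one-hidden-layer network with leaky ReLU σ(t) = max{t, αt}, 0 < α < 1, W_1ᵀ = [[1,0],[−1,0]] (rank 1), b_1 = (−1,−1)ᵀ, W_2ᵀ = [[1,1],[0,0]], b_2 = (0, −2α)ᵀ, the output satisfies (f_2)_1(x) > (f_2)_2(x) exactly when x₁ ∈ (−∞, −1) ∪ (1, ∞), so the decision region of class 1 equals {x ∈ ℝ² : x₁ < −1} ∪ {x ∈ ℝ² : x₁ > 1}, a disconnected set. -/

import Mathlib

theorem low_rank_counterexample (α : ℝ) (hα0 : 0 < α) (hα1 : α < 1) :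
    let f₁ : (Fin 2 → ℝ) → ℝ := fun x =>
      max (x 0 - 1) (α * (x 0 - 1)) + max (-(x 0 + 1)) (-α * (x 0 + 1))
    let f₂ : (Fin 2 → ℝ) → ℝ := fun _ => -2 * α
    {x : Fin 2 → ℝ | f₂ x < f₁ x}
        = {x : Fin 2 → ℝ | x 0 < -1} ∪ {x : Fin 2 → ℝ | x 0 > 1} ∧
    ¬ IsPreconnected {x : Fin 2 → ℝ | f₂ x < f₁ x} := by
  intro f₁ f₂
  have key : {x : Fin 2 → ℝ | f₂ x < f₁ x}
        = {x : Fin 2 → ℝ | x 0 < -1} ∪ {x : Fin 2 → ℝ | x 0 > 1} := by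
    ext x
    simp only [Set.mem_setOf_eq, Set.mem_union, f₁, f₂]
    generalize x 0 = t
    constructor
    · intro h
      by_contra hc
      have h1 : -1 ≤ t := by
        by_contra h'
        exact hc (Or.inl (not_le.mp h'))
      have h2 : t ≤ 1 := by
        by_contra h'
        exact hc (Or.inr (not_le.mp h'))
      have e1 : max (t - 1) (α * (t - 1)) = α * (t - 1) := max_eq_right (by nlinarith)
      have e2 : max (-(t + 1)) (-α * (t + 1)) = -α * (t + 1) := max_eq_right (by nlinarith)
      rw [e1, e2] at h
      linarith
    · rintro (h | h)
      · have e1 := le_max_right (t - 1) (α * (t - 1))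
        have e2 := le_max_left (-(t + 1)) (-α * (t + 1))
        nlinarith
      · have e1 := le_max_left (t - 1) (α * (t - 1))
        have e2 := le_max_right (-(t + 1)) (-α * (t + 1))
        nlinarith
  refine ⟨key, ?_⟩
  rw [key]
  intro hp
  have him := hp.image (fun x : Fin 2 → ℝ => x 0) (continuous_apply 0).continuousOn
  have h0 := him.ordConnected.out (x := -2) (y := 2)
    ⟨fun _ => -2, Or.inl (by norm_num), rfl⟩ ⟨fun _ => 2, Or.inr (by norm_num), rfl⟩
    (show (0 : ℝ) ∈ Set.Icc (-2) 2 by constructor <;> norm_num)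
  obtain ⟨x, hx, hx0⟩ := h0
  have hx0 : x 0 = 0 := hx0
  rcases hx with hx | hx
  · have hx : x 0 < -1 := hx
    linarith
  · have hx : 1 < x 0 := hx
    linarith
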